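/- arXiv:1903.09869 — 2 statements merged into one kernel-verified Lean document; each statement's English description precedes it below -/
import Mathlib

section
/- Let M be a continuous linear operator on a normed vector space X (e.g. a square real matrix acting on Euclidean space with the operator/spectral norm), and suppose σ := ∑_{i=0}^∞ ‖M^i‖ < ∞ (the series of operator norms of the powers of M converges). Consider the recurrence x_{t+1} = M x_t + d_t for t ∈ ℕ. If the disturbance sequence (d_t) is bounded (∃ b ∀ t: ‖d_t‖ ≤ b) and ‖d_t‖ converges with increasing permanence to the interval [0, r] for some r > 0, then ‖x_t‖ converges with increasing permanence to the interval [0, σ r]. -/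
/-- A nonnegative real sequence converges with increasing permanence to the interval `[0, r]`:
for every `ε > 0` and all `D, N` there is `n ≥ N` with `s (n + i) ≤ r + ε` for `i = 1, …, D`. -/
def ConvIPToInterval (s : ℕ → ℝ) (r : ℝ) : Prop :=
  ∀ ε > 0, ∀ D N : ℕ, ∃ n, N ≤ n ∧ ∀ i, 1 ≤ i → i ≤ D → s (n + i) ≤ r + ε

/-!
Unrolling the recurrence over a window of length `k` that starts at time `m` gives
`x (m + k) = M ^ k (x m) + ∑ j < k, M ^ j (d (m + (k - (j + 1))))`, so if `‖d‖ ≤ C` on the window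
then `‖x (m + k)‖ ≤ ‖M ^ k‖ * ‖x m‖ + σ * C`. With `m = 0` and `C = b` this shows that `x` is
bounded. As `‖M ^ k‖ → 0`, there is therefore a `K`, the same for all windows, after which the first
term is negligible. On a window of length `K + D` where `‖d‖` is almost at most `r`, the last `D`
terms of `‖x‖` are thus almost at most `σ * r`.
-/

open Filter Finset

theorem convIPToInterval_iff_forall_lt {s : ℕ → ℝ} {r : ℝ} :
    ConvIPToInterval s r ↔
      ∀ ε > 0, ∀ D N : ℕ, ∃ n, N ≤ n ∧ ∀ j < D, s (n + j) ≤ r + ε := by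
  constructor <;> intro h ε hε D N
  · obtain ⟨n, hn, hs⟩ := h ε hε D N
    refine ⟨n + 1, by omega, fun j hj ↦ ?_⟩
    rw [add_assoc]
    exact hs (1 + j) (by omega) (by omega)
  · obtain ⟨n, hn, hs⟩ := h ε hε (D + 1) N
    exact ⟨n, hn, fun i _ hi ↦ hs i (by omega)⟩

theorem ConvIPToInterval.nonneg {s : ℕ → ℝ} {r : ℝ} (h : ConvIPToInterval s r)
    (hs : ∀ t, 0 ≤ s t) : 0 ≤ r := by
  refine le_of_forall_pos_le_add fun ε hε ↦ ?_
  obtain ⟨n, -, hn⟩ := h ε hε 1 0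
  exact (hs (n + 1)).trans (hn 1 le_rfl le_rfl)

theorem eq_pow_apply_add_sum_of_recurrence {R X : Type*} [Semiring R] [AddCommMonoid X]
    [TopologicalSpace X] [Module R X] {M : X →L[R] X} {x d : ℕ → X}
    (hrec : ∀ t, x (t + 1) = M (x t) + d t) (m k : ℕ) :
    x (m + k) = (M ^ k) (x m) + ∑ j ∈ range k, (M ^ j) (d (m + (k - (j + 1)))) := by
  induction k with
  | zero => simp
  | succ k ih =>
    calc x (m + (k + 1)) = M (x (m + k)) + d (m + k) := hrec (m + k)
      _ = (M ^ (k + 1)) (x m) +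
          (∑ j ∈ range k, (M ^ (j + 1)) (d (m + (k - (j + 1)))) + d (m + k)) := by
        simp only [ih, map_add, map_sum, pow_succ', mul_apply_eq_comp, add_assoc]
      _ = (M ^ (k + 1)) (x m) + ∑ j ∈ range (k + 1), (M ^ j) (d (m + (k + 1 - (j + 1)))) := by
        simp only [sum_range_succ', Nat.add_sub_add_right, Nat.sub_zero, pow_zero,
          one_apply_eq_self]

section Recurrence

variable {𝕜 X : Type*} [NontriviallyNormedField 𝕜] [SeminormedAddCommGroup X] [NormedSpace 𝕜 X]
  {M : X →L[𝕜] X} {x d : ℕ → X}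

theorem norm_le_norm_pow_mul_add_sum_of_recurrence
    (hrec : ∀ t, x (t + 1) = M (x t) + d t) {C : ℝ} {m k : ℕ} (hd : ∀ j < k, ‖d (m + j)‖ ≤ C) :
    ‖x (m + k)‖ ≤ ‖M ^ k‖ * ‖x m‖ + (∑ j ∈ range k, ‖M ^ j‖) * C := by
  rw [eq_pow_apply_add_sum_of_recurrence hrec, sum_mul]
  refine norm_add_le_of_le ((M ^ k).le_opNorm _) (norm_sum_le_of_le _ fun j hj ↦ ?_)
  have hj : j < k := mem_range.1 hj
  exact (M ^ j).le_opNorm_of_le (hd _ (by omega))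

theorem norm_le_norm_pow_mul_add_tsum_of_recurrence (hsum : Summable fun i : ℕ ↦ ‖M ^ i‖)
    (hrec : ∀ t, x (t + 1) = M (x t) + d t) {C : ℝ} (hC : 0 ≤ C) {m k : ℕ}
    (hd : ∀ j < k, ‖d (m + j)‖ ≤ C) :
    ‖x (m + k)‖ ≤ ‖M ^ k‖ * ‖x m‖ + (∑' i : ℕ, ‖M ^ i‖) * C := by
  have hpartial : ∑ j ∈ range k, ‖M ^ j‖ ≤ ∑' i : ℕ, ‖M ^ i‖ :=
    hsum.sum_le_tsum _ fun _ _ ↦ norm_nonneg _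
  exact (norm_le_norm_pow_mul_add_sum_of_recurrence hrec hd).trans (by gcongr)

theorem norm_le_tsum_mul_of_recurrence (hsum : Summable fun i : ℕ ↦ ‖M ^ i‖)
    (hrec : ∀ t, x (t + 1) = M (x t) + d t) {b : ℝ} (hb : ∀ t, ‖d t‖ ≤ b) (t : ℕ) :
    ‖x t‖ ≤ (∑' i : ℕ, ‖M ^ i‖) * (‖x 0‖ + b) := by
  have hb₀ : 0 ≤ b := (norm_nonneg _).trans (hb 0)
  have hpow : ‖M ^ t‖ ≤ ∑' i : ℕ, ‖M ^ i‖ := hsum.le_tsum t fun _ _ ↦ norm_nonneg _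
  calc ‖x t‖ = ‖x (0 + t)‖ := by rw [zero_add]
    _ ≤ ‖M ^ t‖ * ‖x 0‖ + (∑' i : ℕ, ‖M ^ i‖) * b :=
      norm_le_norm_pow_mul_add_tsum_of_recurrence hsum hrec hb₀ fun j _ ↦ hb _
    _ ≤ (∑' i : ℕ, ‖M ^ i‖) * ‖x 0‖ + (∑' i : ℕ, ‖M ^ i‖) * b := by gcongr
    _ = (∑' i : ℕ, ‖M ^ i‖) * (‖x 0‖ + b) := (mul_add _ _ _).symm

theorem stable_linear_disturbed_convIP_general (hsum : Summable fun i : ℕ ↦ ‖M ^ i‖)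
    (hrec : ∀ t, x (t + 1) = M (x t) + d t) {b : ℝ} (hb : ∀ t, ‖d t‖ ≤ b) {r : ℝ}
    (hd : ConvIPToInterval (fun t ↦ ‖d t‖) r) :
    ConvIPToInterval (fun t ↦ ‖x t‖) ((∑' i : ℕ, ‖M ^ i‖) * r) := by
  have hr : 0 ≤ r := hd.nonneg fun _ ↦ norm_nonneg _
  rw [convIPToInterval_iff_forall_lt] at hd ⊢
  intro ε hε D N
  set σ := ∑' i : ℕ, ‖M ^ i‖
  set B := σ * (‖x 0‖ + b)
  have hx : ∀ t, ‖x t‖ ≤ B := norm_le_tsum_mul_of_recurrence hsum hrec hb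
  have hdecay : Tendsto (fun k ↦ ‖M ^ k‖ * B) atTop (nhds 0) := by
    simpa only [zero_mul] using hsum.tendsto_atTop_zero.mul_const B
  obtain ⟨K, hK⟩ := eventually_atTop.1 (hdecay.eventually_le_const (half_pos hε))
  obtain ⟨δ, hδ, hσδ⟩ := exists_pos_mul_lt (half_pos hε) σ
  obtain ⟨n, hn, hwindow⟩ := hd δ hδ (K + D) N
  refine ⟨n + K, by omega, fun j hj ↦ ?_⟩
  calc ‖x (n + K + j)‖ = ‖x (n + (K + j))‖ := by rw [add_assoc]
    _ ≤ ‖M ^ (K + j)‖ * ‖x n‖ + σ * (r + δ) :=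
      norm_le_norm_pow_mul_add_tsum_of_recurrence hsum hrec (by positivity) fun i hi ↦
        hwindow i (by omega)
    _ ≤ ‖M ^ (K + j)‖ * B + σ * (r + δ) := by gcongr; exact hx n
    _ ≤ ε / 2 + σ * (r + δ) := by gcongr; exact hK (K + j) (by omega)
    _ ≤ σ * r + ε := by linarith

end Recurrence

/-- Linear recurrence `x_{t+1} = M x_t + d_t` with `σ = ∑ ‖Mⁱ‖ < ∞`: if the bounded
disturbances vanish with increasing permanence up to error `r`, then `‖x_t‖` converges
with increasing permanence to `[0, σ r]`. -/
theorem stable_linear_disturbed_convIP {X : Type*} [NormedAddCommGroup X] [NormedSpace ℝ X]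
    (M : X →L[ℝ] X)
    (hsum : Summable fun i : ℕ => ‖M ^ i‖)
    (σ : ℝ) (hσ : σ = ∑' i : ℕ, ‖M ^ i‖)
    (x d : ℕ → X) (hrec : ∀ t : ℕ, x (t + 1) = M (x t) + d t)
    (b : ℝ) (hb : ∀ t, ‖d t‖ ≤ b)
    (r : ℝ) (hr : 0 < r)
    (hd : ConvIPToInterval (fun t => ‖d t‖) r) :
    ConvIPToInterval (fun t => ‖x t‖) (σ * r) :=
  hσ ▸ stable_linear_disturbed_convIP_general hsum hrec hb hd
end

section
/- Consider an online mean-square regression setting: (Ω, P) a probability space, (x_t)_{t∈ℕ} an i.i.d. sequence of 𝒳-valued random inputs with common distribution p, ℓ : 𝒳 × Θ → ℝ_{≥0} a non-negative measurable loss bounded by a constant B, and (θ_t)_{t∈ℕ} a sequence of Θ-valued random parameters where each θ_t is measurable with respect to the information available before time t (in particular θ_t is independent of x_t). Define r_f := inf_{θ∈Θ} E_{x∼p}[ℓ(x, θ)]. Assume: (a) there is Δ : ℕ → ℝ with Δ(T)/T → 0 such that almost surely, for all T, ∑_{t=1}^T ℓ(x_t, θ_t) ≤ inf_{θ∈Θ}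 ∑_{t=1}^T ℓ(x_t, θ) + Δ(T) (sublinear external regret); and (b) almost surely, inf_{θ∈Θ} (1/T) ∑_{t=1}^T ℓ(x_t, θ) → r_f as T → ∞. Then the sequence of expected prediction losses converges to r_f with increasing permanence: E[ℓ(x_t, θ_t)] ⇝ r_f as t → ∞. -/
open MeasureTheory ProbabilityTheory Filter

/-- Convergence with increasing permanence (i.p.) of a real sequence to `s'`. -/
def ConvIP (s : ℕ → ℝ) (s' : ℝ) : Prop :=
  ∀ ε > 0, ∀ D N : ℕ, ∃ n, N ≤ n ∧ ∀ i, 1 ≤ i → i ≤ D → |s' - s (n + i)| ≤ ε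

/-!
Since `θ t` is independent of `x t`, every expected loss is an average of the risks
`E_{x∼p}[ℓ(x, θ')]`, so it is at least `r_f`. Comparing the learner with a fixed parameter `θ'`
in expectation, and then optimizing over `θ'`, shows that the total excess of the first `T`
expected losses over `r_f` is at most `Δ T`. The excesses are therefore nonnegative with Cesàro
means tending to `0`; were some excess larger than `ε` in every late window of length `D`, these
means would stay above roughly `ε / D`.
-/

open scoped Topology

lemma nsmul_le_sum_Ioc_of_forall_exists_le {M : Type*} [AddCommMonoid M] [PartialOrder M]
    [IsOrderedAddMonoid M] {a : ℕ → M} {c : M} {D N : ℕ} (ha : ∀ t, 0 ≤ a t)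
    (hwindow : ∀ n, N ≤ n → ∃ t ∈ Finset.Ioc n (n + D), c ≤ a t) (k : ℕ) :
    k • c ≤ ∑ t ∈ Finset.Ioc N (N + k * D), a t := by
  induction k with
  | zero => simp
  | succ k ih =>
    obtain ⟨t, ht, hct⟩ := hwindow (N + k * D) (Nat.le_add_right _ _)
    have hlast : c ≤ ∑ t ∈ Finset.Ioc (N + k * D) (N + k * D + D), a t :=
      hct.trans (Finset.single_le_sum (fun t _ ↦ ha t) ht)
    rw [succ_nsmul, add_one_mul, ← add_assoc,
      ← Finset.sum_Ioc_consecutive a (Nat.le_add_right N (k * D)) (Nat.le_add_right _ D)]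
    exact add_le_add ih hlast

lemma ConvIP.of_tendsto_average_sub_zero {s : ℕ → ℝ} {r : ℝ} (hs : ∀ t, r ≤ s t)
    (havg : Tendsto (fun T : ℕ ↦ (∑ t ∈ Finset.Icc 1 T, (s t - r)) / T) atTop (𝓝 0)) :
    ConvIP s r := by
  intro ε hε D N
  by_contra! hlarge
  have hD : 0 < D := by
    obtain ⟨i, hi, hiD, -⟩ := hlarge N le_rfl
    omega
  have hwindow (n : ℕ) (hn : N ≤ n) : ∃ t ∈ Finset.Ioc n (n + D), ε ≤ s t - r := by
    obtain ⟨i, hi, hiD, hlt⟩ := hlarge n hn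
    rw [abs_sub_comm, abs_of_nonneg (sub_nonneg.2 (hs _))] at hlt
    exact ⟨n + i, Finset.mem_Ioc.2 ⟨by omega, by omega⟩, hlt.le⟩
  have hsum (k : ℕ) : ε * k ≤ ∑ t ∈ Finset.Icc 1 (N + D * k), (s t - r) := by
    calc ε * k = k • ε := by rw [nsmul_eq_mul, mul_comm]
      _ ≤ ∑ t ∈ Finset.Ioc N (N + k * D), (s t - r) :=
        nsmul_le_sum_Ioc_of_forall_exists_le (fun t ↦ sub_nonneg.2 (hs t)) hwindow k
      _ ≤ ∑ t ∈ Finset.Icc 1 (N + D * k), (s t - r) := by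
        rw [mul_comm k D]
        refine Finset.sum_le_sum_of_subset_of_nonneg (fun t ht ↦ ?_)
          fun t _ _ ↦ sub_nonneg.2 (hs t)
        rw [Finset.mem_Ioc] at ht
        exact Finset.mem_Icc.2 ⟨by omega, ht.2⟩
  have htimes : Tendsto (fun k : ℕ ↦ N + D * k) atTop atTop :=
    tendsto_atTop_mono
      (fun k ↦ (Nat.le_mul_of_pos_left k hD).trans (Nat.le_add_left _ N)) tendsto_id
  have hrate : Tendsto (fun k : ℕ ↦ (0 + ε * k) / (N + D * k : ℝ)) atTop (𝓝 (ε / D)) :=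
    tendsto_add_mul_div_add_mul_atTop_nhds 0 (N : ℝ) ε (by positivity)
  have hle : ε / D ≤ 0 := le_of_tendsto_of_tendsto' hrate (havg.comp htimes) fun k ↦ by
    simp only [Function.comp_apply, zero_add, Nat.cast_add, Nat.cast_mul]
    gcongr
    exact hsum k
  exact hle.not_gt (by positivity)

section Probability

variable {Ω 𝒳 𝒴 : Type*} [MeasurableSpace Ω] [MeasurableSpace 𝒳] [MeasurableSpace 𝒴]
  {P : Measure Ω}

lemma integral_le_iInf_integral {ι : Type*} [Nonempty ι] {f : Ω → ℝ} {g : ι → Ω → ℝ}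
    (hf : Integrable f P) (hg : ∀ i, Integrable (g i) P)
    (hbdd : ∀ᵐ ω ∂P, BddBelow (Set.range fun i ↦ g i ω))
    (hle : ∀ᵐ ω ∂P, f ω ≤ ⨅ i, g i ω) :
    ∫ ω, f ω ∂P ≤ ⨅ i, ∫ ω, g i ω ∂P :=
  le_ciInf fun i ↦ integral_mono_ae hf (hg i) <| by
    filter_upwards [hbdd, hle] with ω hbddω hleω using hleω.trans (ciInf_le hbddω i)

lemma integral_comp_eq_integral_integral_of_indepFun {E : Type*} [NormedAddCommGroup E]
    [NormedSpace ℝ E] [IsFiniteMeasure P] {μ : Measure 𝒳} {ν : Measure 𝒴} {X : Ω → 𝒳} {Y : Ω → 𝒴}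
    (hX : HasLaw X μ P) (hY : HasLaw Y ν P) (hXY : IndepFun X Y P) {f : 𝒳 × 𝒴 → E}
    (hf : Integrable f (μ.prod ν)) :
    ∫ ω, f (X ω, Y ω) ∂P = ∫ y, ∫ x, f (x, y) ∂μ ∂ν := by
  have : IsFiniteMeasure μ := hX.isFiniteMeasure_iff.1 inferInstance
  have : IsFiniteMeasure ν := hY.isFiniteMeasure_iff.1 inferInstance
  rw [← integral_prod_symm f hf]
  exact (hXY.hasLaw_prod hX hY).integral_comp hf.aestronglyMeasurable

lemma iInf_integral_le_integral_comp_of_indepFun [IsProbabilityMeasure P] {μ : Measure 𝒳}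
    {ν : Measure 𝒴} {X : Ω → 𝒳} {Y : Ω → 𝒴} (hX : HasLaw X μ P) (hY : HasLaw Y ν P)
    (hXY : IndepFun X Y P) {f : 𝒳 × 𝒴 → ℝ} (hf : Integrable f (μ.prod ν))
    (hbdd : BddBelow (Set.range fun y ↦ ∫ x, f (x, y) ∂μ)) :
    ⨅ y, ∫ x, f (x, y) ∂μ ≤ ∫ ω, f (X ω, Y ω) ∂P := by
  have : IsProbabilityMeasure μ := hX.isProbabilityMeasure_iff.1 inferInstance
  have : IsProbabilityMeasure ν := hY.isProbabilityMeasure_iff.1 inferInstance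
  calc ⨅ y, ∫ x, f (x, y) ∂μ = ∫ _, (⨅ y, ∫ x, f (x, y) ∂μ) ∂ν := by simp
    _ ≤ ∫ y, ∫ x, f (x, y) ∂μ ∂ν :=
      integral_mono (integrable_const _) hf.integral_prod_right fun y ↦ ciInf_le hbdd y
    _ = ∫ ω, f (X ω, Y ω) ∂P :=
      (integral_comp_eq_integral_integral_of_indepFun hX hY hXY hf).symm

lemma bddBelow_range_integral_prodMk_right {Θ : Type*} {μ : Measure 𝒳} [IsProbabilityMeasure μ]
    {f : 𝒳 × Θ → ℝ} (hbdd : BddBelow (Set.range f))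
    (hf : ∀ θ, Integrable (fun a ↦ f (a, θ)) μ) :
    BddBelow (Set.range fun θ ↦ ∫ a, f (a, θ) ∂μ) := by
  obtain ⟨c, hc⟩ := hbdd
  refine ⟨c, Set.forall_mem_range.2 fun θ ↦ ?_⟩
  calc c = ∫ _, c ∂μ := by simp
    _ ≤ ∫ a, f (a, θ) ∂μ :=
      integral_mono (integrable_const c) (hf θ) fun a ↦ hc (Set.mem_range_self (a, θ))

lemma sum_integral_le_card_mul_iInf_integral_add {ι Θ : Type*} [Nonempty Θ]
    [IsProbabilityMeasure P] {p : Measure 𝒳} {s : Finset ι} {x : ι → Ω → 𝒳}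
    (hx : ∀ t ∈ s, HasLaw (x t) p P) {ℓ : 𝒳 × Θ → ℝ} (hbdd : BddBelow (Set.range ℓ))
    (hℓ : ∀ θ, Integrable (fun a ↦ ℓ (a, θ)) p) {L : ι → Ω → ℝ}
    (hL : ∀ t ∈ s, Integrable (L t) P) {δ : ℝ}
    (hregret : ∀ᵐ ω ∂P, ∑ t ∈ s, L t ω ≤ (⨅ θ, ∑ t ∈ s, ℓ (x t ω, θ)) + δ) :
    ∑ t ∈ s, ∫ ω, L t ω ∂P ≤ s.card * (⨅ θ, ∫ a, ℓ (a, θ) ∂p) + δ := by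
  have hcomp (θ : Θ) (t : ι) (ht : t ∈ s) : Integrable (fun ω ↦ ℓ (x t ω, θ)) P :=
    ((hx t ht).map_eq.symm ▸ hℓ θ).comp_aemeasurable (hx t ht).aemeasurable
  have hsumL : Integrable (fun ω ↦ ∑ t ∈ s, L t ω) P := integrable_finsetSum s hL
  have hsumbdd (ω : Ω) : BddBelow (Set.range fun θ ↦ ∑ t ∈ s, ℓ (x t ω, θ)) := by
    obtain ⟨c, hc⟩ := hbdd
    exact ⟨s.card • c, Set.forall_mem_range.2 fun θ ↦
      s.card_nsmul_le_sum _ c fun t _ ↦ hc (Set.mem_range_self _)⟩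
  have hfixed (θ : Θ) :
      ∫ ω, ∑ t ∈ s, ℓ (x t ω, θ) ∂P = s.card * ∫ a, ℓ (a, θ) ∂p := by
    rw [integral_finsetSum s (hcomp θ), ← nsmul_eq_mul]
    exact Finset.sum_eq_card_nsmul fun t ht ↦
      (hx t ht).integral_comp (hℓ θ).aestronglyMeasurable
  rw [← sub_le_iff_le_add]
  calc ∑ t ∈ s, ∫ ω, L t ω ∂P - δ = ∫ ω, (∑ t ∈ s, L t ω - δ) ∂P := by
        rw [integral_sub hsumL (integrable_const δ), integral_finsetSum s hL]
        simp
    _ ≤ ⨅ θ, ∫ ω, ∑ t ∈ s, ℓ (x t ω, θ) ∂P :=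
        integral_le_iInf_integral (hsumL.sub (integrable_const δ))
          (fun θ ↦ integrable_finsetSum s (hcomp θ)) (.of_forall hsumbdd)
          (hregret.mono fun ω hω ↦ sub_le_iff_le_add.2 hω)
    _ = s.card * ⨅ θ, ∫ a, ℓ (a, θ) ∂p := by
        simp only [hfixed, Real.mul_iInf_of_nonneg (Nat.cast_nonneg s.card)]

end Probability

theorem expected_losses_convIP_to_representational_error_general
    {Ω 𝒳 Θ : Type*} [MeasurableSpace Ω] [MeasurableSpace 𝒳] [MeasurableSpace Θ] [Nonempty Θ]
    {P : Measure Ω} [IsProbabilityMeasure P] {p : Measure 𝒳}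
    {x : ℕ → Ω → 𝒳} (hx : ∀ t, HasLaw (x t) p P)
    {θ : ℕ → Ω → Θ} (hθ : ∀ t, AEMeasurable (θ t) P) (hindep : ∀ t, IndepFun (θ t) (x t) P)
    {ℓ : 𝒳 × Θ → ℝ} (hmeas : Measurable ℓ) (hbdd : BddBelow (Set.range ℓ))
    (hloss : ∀ t, Integrable (fun ω ↦ ℓ (x t ω, θ t ω)) P)
    (hrisk : ∀ θ', Integrable (fun a ↦ ℓ (a, θ')) p)
    {Δ : ℕ → ℝ} (hΔ : Tendsto (fun T : ℕ ↦ Δ T / T) atTop (𝓝 0))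
    (hregret : ∀ᵐ ω ∂P, ∀ T : ℕ, ∑ t ∈ Finset.Icc 1 T, ℓ (x t ω, θ t ω) ≤
      (⨅ θ', ∑ t ∈ Finset.Icc 1 T, ℓ (x t ω, θ')) + Δ T) :
    ConvIP (fun t ↦ ∫ ω, ℓ (x t ω, θ t ω) ∂P) (⨅ θ', ∫ a, ℓ (a, θ') ∂p) := by
  have : IsProbabilityMeasure p := (hx 0).isProbabilityMeasure_iff.1 inferInstance
  have hlower (t : ℕ) : ⨅ θ', ∫ a, ℓ (a, θ') ∂p ≤ ∫ ω, ℓ (x t ω, θ t ω) ∂P := by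
    have hlaw : HasLaw (θ t) (P.map (θ t)) P := ⟨hθ t, rfl⟩
    have hjoint := (hindep t).symm.hasLaw_prod (hx t) hlaw
    have hint : Integrable ℓ (p.prod (P.map (θ t))) := by
      rw [← hjoint.map_eq]
      exact (integrable_map_measure hmeas.aestronglyMeasurable hjoint.aemeasurable).2 (hloss t)
    exact iInf_integral_le_integral_comp_of_indepFun (hx t) hlaw (hindep t).symm hint
      (bddBelow_range_integral_prodMk_right hbdd hrisk)
  have hupper (T : ℕ) : ∑ t ∈ Finset.Icc 1 T,
      (∫ ω, ℓ (x t ω, θ t ω) ∂P - ⨅ θ', ∫ a, ℓ (a, θ') ∂p) ≤ Δ T := by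
    rw [Finset.sum_sub_distrib, Finset.sum_const, nsmul_eq_mul, sub_le_iff_le_add']
    exact sum_integral_le_card_mul_iInf_integral_add (fun t _ ↦ hx t) hbdd hrisk
      (fun t _ ↦ hloss t) (hregret.mono fun ω hω ↦ hω T)
  refine ConvIP.of_tendsto_average_sub_zero hlower (squeeze_zero (fun T ↦ ?_) (fun T ↦ ?_) hΔ)
  · exact div_nonneg (Finset.sum_nonneg fun t _ ↦ sub_nonneg.2 (hlower t)) T.cast_nonneg
  · exact div_le_div_of_nonneg_right (hupper T) T.cast_nonneg

/-- Online mean-square regression with i.i.d. inputs and a sublinear-external-regret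
learner: the expected prediction losses converge with increasing permanence to the
representational error `r_f`. -/
theorem expected_losses_convIP_to_representational_error
    {Ω 𝒳 Θ : Type*} [MeasurableSpace Ω] [MeasurableSpace 𝒳] [MeasurableSpace Θ]
    [Nonempty Θ]
    (P : Measure Ω) [IsProbabilityMeasure P] (p : Measure 𝒳)
    (x : ℕ → Ω → 𝒳) (hxmeas : ∀ t, Measurable (x t))
    (hiid : iIndepFun x P)
    (hdist : ∀ t, Measure.map (x t) P = p)
    (ℓ : 𝒳 × Θ → ℝ) (hmeas : Measurable ℓ) (hnn : ∀ z, 0 ≤ ℓ z)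
    (B : ℝ) (hB : ∀ z, ℓ z ≤ B)
    (θ : ℕ → Ω → Θ) (hθmeas : ∀ t, Measurable (θ t))
    (hindep : ∀ t, IndepFun (θ t) (x t) P)
    (rf : ℝ) (hrf : rf = ⨅ θ' : Θ, ∫ a, ℓ (a, θ') ∂p)
    (Δ : ℕ → ℝ) (hΔ : Tendsto (fun T : ℕ => Δ T / T) atTop (nhds 0))
    (hregret : ∀ᵐ ω ∂P, ∀ T : ℕ,
      ∑ t ∈ Finset.Icc 1 T, ℓ (x t ω, θ t ω) ≤
        (⨅ θ' : Θ, ∑ t ∈ Finset.Icc 1 T, ℓ (x t ω, θ')) + Δ T)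
    (hslln : ∀ᵐ ω ∂P,
      Tendsto (fun T : ℕ => ⨅ θ' : Θ, (1 / (T : ℝ)) * ∑ t ∈ Finset.Icc 1 T, ℓ (x t ω, θ'))
        atTop (nhds rf)) :
    ConvIP (fun t => ∫ ω, ℓ (x t ω, θ t ω) ∂P) rf := by
  have hlaw (t : ℕ) : HasLaw (x t) p P := ⟨(hxmeas t).aemeasurable, hdist t⟩
  have : IsProbabilityMeasure p := (hlaw 0).isProbabilityMeasure_iff.1 inferInstance
  have hIcc (z : 𝒳 × Θ) : ℓ z ∈ Set.Icc 0 B := ⟨hnn z, hB z⟩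
  exact hrf ▸ expected_losses_convIP_to_representational_error_general hlaw
    (fun t ↦ (hθmeas t).aemeasurable) hindep hmeas ⟨0, Set.forall_mem_range.2 hnn⟩
    (fun _ ↦ .of_mem_Icc 0 B (by fun_prop) (.of_forall fun _ ↦ hIcc _))
    (fun _ ↦ .of_mem_Icc 0 B (by fun_prop) (.of_forall fun _ ↦ hIcc _)) hΔ hregret
end
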